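/- The unimodal spi-logic SPi_lin axiomatised by Ec_lin = {e_refl, e_trans, e_wcon} is complete: for every sp-implication ι, Ec_lin ⊨_Kr ι if and only if Ec_lin ⊨_SLO ι. (The frames validating Ec_lin are exactly the linear quasiorders, i.e., the reflexive, transitive and weakly connected frames.) -/

import Mathlib

/-- Strictly positive modal formulas over a signature `Sig`:
propositional variables, `⊤`, conjunction, and a diamond `◇_r` for each `r : Sig`. -/
inductive SP (Sig : Type) : Type
  | var : ℕ → SP Sig
  | top : SP Sig
  | and : SP Sig → SP Sig → SP Sig
  | dia : Sig → SP Sig → SP Sig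

/-- An sp-implication `σ → τ` is a pair of sp-formulas. -/
abbrev SPImp (Sig : Type) := SP Sig × SP Sig

/-- A SLO of signature `Sig`: a meet-semilattice with a greatest element,
equipped with a monotone unary operator for each element of the signature. -/
structure SLO (Sig : Type) where
  carrier : Type
  [instInf : SemilatticeInf carrier]
  [instTop : OrderTop carrier]
  dia : Sig → carrier → carrier
  mono : ∀ r : Sig, Monotone (dia r)

attribute [instance] SLO.instInf SLO.instTop

namespace SLO

variable {Sig : Type}

/-- Evaluation of an sp-formula in a SLO under a valuation of the variables. -/
def eval (A : SLO Sig) (v : ℕ → A.carrier) : SP Sig → A.carrier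
  | .var n => v n
  | .top => ⊤
  | .and φ ψ => eval A v φ ⊓ eval A v ψ
  | .dia r φ => A.dia r (eval A v φ)

/-- A SLO validates an sp-implication `σ → τ` if under every valuation
the value of `σ` is below the value of `τ`. -/
def Valid (A : SLO Sig) (ι : SPImp Sig) : Prop :=
  ∀ v : ℕ → A.carrier, eval A v ι.1 ≤ eval A v ι.2

/-- A SLO validates a set of sp-implications. -/
def ValidSet (A : SLO Sig) (Ax : Set (SPImp Sig)) : Prop :=
  ∀ ι ∈ Ax, Valid A ι

end SLO

/-- A Kripke frame: a nonempty type of worlds with a binary accessibility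
relation for each element of the signature. -/
structure KFrame (Sig : Type) where
  world : Type
  [instNonempty : Nonempty world]
  rel : Sig → world → world → Prop

attribute [instance] KFrame.instNonempty

namespace KFrame

variable {Sig : Type}

/-- Truth of an sp-formula at a world of a Kripke model `(F, v)`. -/
def truth (F : KFrame Sig) (v : ℕ → Set F.world) : SP Sig → F.world → Prop
  | .var n, w => w ∈ v n
  | .top, _ => True
  | .and φ ψ, w => truth F v φ w ∧ truth F v ψ w
  | .dia r φ, w => ∃ u, F.rel r w u ∧ truth F v φ u

/-- A frame validates an sp-implication `σ → τ` if in every Kripke model on it,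
at every world, truth of `σ` implies truth of `τ`. -/
def Valid (F : KFrame Sig) (ι : SPImp Sig) : Prop :=
  ∀ (v : ℕ → Set F.world) (w : F.world), truth F v ι.1 w → truth F v ι.2 w

/-- A frame validates a set of sp-implications. -/
def ValidSet (F : KFrame Sig) (Ax : Set (SPImp Sig)) : Prop :=
  ∀ ι ∈ Ax, Valid F ι

/-- The complex algebra `F*` of a frame, as a SLO: all subsets of the worlds,
with intersection as meet, the whole set as `⊤`, and
`◇_r X = {w | ∃ u ∈ X, rel r w u}`. -/
def cmpl (F : KFrame Sig) : SLO Sig where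
  carrier := Set F.world
  dia r X := {w | ∃ u ∈ X, F.rel r w u}
  mono r := by
    intro X Y hXY w hw
    obtain ⟨u, hu, hr⟩ := hw
    exact ⟨u, hXY hu, hr⟩

end KFrame

/-- An sp-embedding between SLOs: an injective map preserving `⊤`,
binary meets, and each operator. -/
def IsSpEmbedding {Sig : Type} (A B : SLO Sig) (η : A.carrier → B.carrier) : Prop :=
  Function.Injective η ∧ η ⊤ = ⊤ ∧
    (∀ a b : A.carrier, η (a ⊓ b) = η a ⊓ η b) ∧
    ∀ (r : Sig) (a : A.carrier), η (A.dia r a) = B.dia r (η a)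

/-- `Ax ⊨_Kr ι`: every frame validating every member of `Ax` validates `ι`. -/
def KrCons {Sig : Type} (Ax : Set (SPImp Sig)) (ι : SPImp Sig) : Prop :=
  ∀ F : KFrame Sig, F.ValidSet Ax → F.Valid ι

/-- `Ax ⊨_SLO ι`: every SLO validating every member of `Ax` validates `ι`. -/
def SLOCons {Sig : Type} (Ax : Set (SPImp Sig)) (ι : SPImp Sig) : Prop :=
  ∀ A : SLO Sig, A.ValidSet Ax → A.Valid ι

/-- The spi-logic axiomatised by `Ax` is complete:
`Ax ⊨_Kr ι` iff `Ax ⊨_SLO ι` for every sp-implication `ι`. -/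
def IsCompleteLogic {Sig : Type} (Ax : Set (SPImp Sig)) : Prop :=
  ∀ ι : SPImp Sig, KrCons Ax ι ↔ SLOCons Ax ι

/-- The spi-logic axiomatised by `Ax` is complex: every SLO validating every
member of `Ax` sp-embeds into the complex algebra of some frame validating
every member of `Ax`. -/
def IsComplexLogic {Sig : Type} (Ax : Set (SPImp Sig)) : Prop :=
  ∀ A : SLO Sig, A.ValidSet Ax →
    ∃ F : KFrame Sig, F.ValidSet Ax ∧
      ∃ η : A.carrier → (KFrame.cmpl F).carrier, IsSpEmbedding A (KFrame.cmpl F) η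

/-- The unimodal diamond. -/
def SP.d (φ : SP Unit) : SP Unit := SP.dia () φ

/-- `p → ◇p` (reflexivity). -/
def e_refl : SPImp Unit := (SP.var 0, (SP.var 0).d)

/-- `◇◇p → ◇p` (transitivity). -/
def e_trans : SPImp Unit := (((SP.var 0).d).d, (SP.var 0).d)

/-- `q ∧ ◇p → ◇(p ∧ ◇q)` (symmetry). -/
def e_sym : SPImp Unit :=
  ((SP.var 1).and ((SP.var 0).d), ((SP.var 0).and ((SP.var 1).d)).d)

/-- `◇(p ∧ q) ∧ ◇(p ∧ r) → ◇(p ∧ ◇q ∧ ◇r)` (weak connectedness). -/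
def e_wcon : SPImp Unit :=
  ((((SP.var 0).and (SP.var 1)).d).and (((SP.var 0).and (SP.var 2)).d),
   ((SP.var 0).and (((SP.var 1).d).and ((SP.var 2).d))).d)

/-!
A branch of `τ` is a chain `◇(b₁ ∧ ◇(b₂ ∧ …))` of conjunctions of variables obtained by always
descending into one diamond. Modulo `e_trans` and `e_wcon`, the formula `τ` is the meet of its
top-level variables and of its finitely many branches, because several demands
`◇(b ∧ x)`, `◇(b ∧ y)` with `◇x ≤ x` and `◇y ≤ y` can be met at the same successor. So it suffices
to show `σ ≤ c` for a single branch `c` of `τ`.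

For this, the elements of the algebra itself serve as worlds: `y` is accessible from `x` when every
tail `c'` of the branch that lies above `y` also lies above `x`. By `e_trans` these tails form a
chain, so the frame is a linear quasiorder, and they are closed under `◇`, so the world `x`
satisfies every formula whose value is above `x`. Hence `σ`, and with it `τ`, holds at the value of
`σ`; by `e_refl`, every world at which `τ` holds is below the branch `c`. With no tails at all, the
same model bounds `σ` by the top-level variables of `τ`.
-/

/-- The set `Ec_lin` of axioms of `SPi_lin`. -/
abbrev EcLin : Set (SPImp Unit) := {e_refl, e_trans, e_wcon}

namespace KFrame

section ComplexAlgebra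

variable {Sig : Type} (F : KFrame Sig)

theorem cmpl_eval (v : ℕ → Set F.world) (φ : SP Sig) :
    F.cmpl.eval v φ = ({w | F.truth v φ w} : Set F.world) := by
  induction φ with
  | var n => rfl
  | top => rfl
  | and φ ψ ihφ ihψ => exact congrArg₂ (· ⊓ ·) ihφ ihψ
  | dia r φ ih =>
    exact (congrArg (F.cmpl.dia r) ih).trans
      (Set.ext fun w => exists_congr fun u => and_comm)

theorem cmpl_valid_iff (ι : SPImp Sig) : F.cmpl.Valid ι ↔ F.Valid ι :=
  forall_congr' fun (v : ℕ → Set F.world) =>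
    Iff.of_eq (congrArg₂ (· ≤ ·) (F.cmpl_eval v ι.1) (F.cmpl_eval v ι.2))

end ComplexAlgebra

section Correspondence

variable (F : KFrame Unit)

theorem valid_e_refl_iff : F.Valid e_refl ↔ ∀ x, F.rel () x x := by
  refine ⟨fun h x => ?_, fun h v w hw => ⟨w, h w, hw⟩⟩
  obtain ⟨_, hxu, rfl⟩ := h (fun _ => {x}) x rfl
  exact hxu

theorem valid_e_trans_iff :
    F.Valid e_trans ↔ ∀ ⦃x y z⦄, F.rel () x y → F.rel () y z → F.rel () x z := by
  constructor
  · intro h x y z hxy hyz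
    obtain ⟨_, hxu, rfl⟩ := h (fun _ => {z}) x ⟨y, hxy, z, hyz, rfl⟩
    exact hxu
  · rintro h v x ⟨y, hxy, z, hyz, hz⟩
    exact ⟨z, h hxy hyz, hz⟩

theorem weaklyConnected_of_valid_e_wcon (h : F.Valid e_wcon) (x y z : F.world)
    (hxy : F.rel () x y) (hxz : F.rel () x z) : F.rel () y z ∨ F.rel () z y ∨ y = z := by
  obtain ⟨u, -, hu, ⟨_, huy, rfl⟩, ⟨_, huz, rfl⟩⟩ :=
    h (fun | 0 => {y, z} | 1 => {y} | _ => {z}) x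
      ⟨⟨y, hxy, Or.inl rfl, rfl⟩, ⟨z, hxz, Or.inr rfl, rfl⟩⟩
  rcases hu with rfl | rfl
  · exact Or.inl huz
  · exact Or.inr (Or.inl huy)

theorem valid_e_wcon_of_weaklyConnected (hrefl : ∀ x, F.rel () x x)
    (hwcon : ∀ x y z, F.rel () x y → F.rel () x z →
      F.rel () y z ∨ F.rel () z y ∨ y = z) : F.Valid e_wcon := by
  rintro v x ⟨⟨y, hxy, hpy, hqy⟩, ⟨z, hxz, hpz, hrz⟩⟩
  rcases hwcon x y z hxy hxz with hyz | hzy | rfl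
  · exact ⟨y, hxy, hpy, ⟨y, hrefl y, hqy⟩, ⟨z, hyz, hrz⟩⟩
  · exact ⟨z, hxz, hpz, ⟨y, hzy, hqy⟩, ⟨z, hrefl z, hrz⟩⟩
  · exact ⟨y, hxy, hpy, ⟨y, hrefl y, hqy⟩, ⟨y, hrefl y, hrz⟩⟩

theorem validSet_ecLin_iff :
    F.ValidSet EcLin ↔
      (∀ x, F.rel () x x) ∧ (∀ ⦃x y z⦄, F.rel () x y → F.rel () y z → F.rel () x z) ∧
        ∀ x y z, F.rel () x y → F.rel () x z → F.rel () y z ∨ F.rel () z y ∨ y = z := by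
  simp only [ValidSet, EcLin, Set.mem_insert_iff, Set.mem_singleton_iff, forall_eq_or_imp,
    forall_eq, valid_e_refl_iff, valid_e_trans_iff]
  exact and_congr_right fun hrefl => and_congr_right fun _ =>
    ⟨F.weaklyConnected_of_valid_e_wcon, F.valid_e_wcon_of_weaklyConnected hrefl⟩

end Correspondence

end KFrame

theorem SLOCons.krCons {Sig : Type} {Ax : Set (SPImp Sig)} {ι : SPImp Sig} (h : SLOCons Ax ι) :
    KrCons Ax ι := fun F hF =>
  (F.cmpl_valid_iff ι).1 (h F.cmpl fun κ hκ => (F.cmpl_valid_iff κ).2 (hF κ hκ))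

namespace SLO

section CutModel

variable {Sig : Type} (A : SLO Sig) (C : Set A.carrier) (v : ℕ → A.carrier)

/-- The frame on the elements of `A` in which `y` is accessible from `x`, for every modality, if
each cut `c ∈ C` above `y` is also above `x`. It serves as a countermodel to inequalities with
right-hand side in `C`. -/
def cutFrame : KFrame Sig where
  world := A.carrier
  instNonempty := ⟨⊤⟩
  rel _ x y := ∀ c ∈ C, y ≤ c → x ≤ c

/-- The Kripke valuation induced by an algebraic valuation `v` on a frame whose worlds are the
elements of `A`: a variable `n` holds at `x` if `x ≤ v n`. -/
def lowerValuation : ℕ → Set A.carrier := fun n => Set.Iic (v n)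

/-- The meet of the top-level variables of a formula, i.e. its value after every diamond
subformula is replaced by `⊤`. -/
def varMeet : SP Sig → A.carrier
  | .var n => v n
  | .top => ⊤
  | .and φ ψ => varMeet φ ⊓ varMeet ψ
  | .dia _ _ => ⊤

variable {A C v}

theorem truth_cutFrame_of_le_eval (hC : ∀ r, ∀ c ∈ C, A.dia r c ≤ c) {φ : SP Sig} {x : A.carrier}
    (hx : x ≤ A.eval v φ) : (A.cutFrame C).truth (A.lowerValuation v) φ x := by
  induction φ generalizing x with
  | var n => exact hx
  | top => trivial
  | and φ ψ ihφ ihψ => exact ⟨ihφ (hx.trans inf_le_left), ihψ (hx.trans inf_le_right)⟩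
  | dia r φ ih =>
    have hacc : (A.cutFrame C).rel r x (A.eval v φ) := fun c hc hφ =>
      hx.trans ((A.mono r hφ).trans (hC r c hc))
    exact ⟨A.eval v φ, hacc, ih le_rfl⟩

theorem le_varMeet_of_truth_cutFrame {φ : SP Sig} {x : A.carrier}
    (hx : (A.cutFrame C).truth (A.lowerValuation v) φ x) : x ≤ A.varMeet v φ := by
  induction φ with
  | var n => exact hx
  | top => exact le_top
  | and φ ψ ihφ ihψ => exact le_inf (ihφ hx.1) (ihψ hx.2)
  | dia r φ => exact le_top

end CutModel

theorem cutFrame_validSet_ecLin {A : SLO Unit} {C : Set A.carrier} (hC : IsChain (· ≤ ·) C) :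
    (A.cutFrame C).ValidSet EcLin := by
  refine (A.cutFrame C).validSet_ecLin_iff.2
    ⟨fun _ _ _ => id, fun _ _ _ hxy hyz c hc hz => hxy c hc (hyz c hc hz), ?_⟩
  intro _ (y : A.carrier) (z : A.carrier) _ _
  by_cases hyz : (A.cutFrame C).rel () y z
  · exact Or.inl hyz
  obtain ⟨c, hc, hzc, hyc⟩ : ∃ c ∈ C, z ≤ c ∧ ¬ y ≤ c := by
    simpa [cutFrame] using hyz
  refine Or.inr (Or.inl fun d hd hyd => ?_)
  rcases hC.total hc hd with hcd | hdc
  · exact le_trans hzc hcd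
  · exact absurd (le_trans hyd hdc) hyc

theorem dia_multisetInf_le {Sig : Type} {A : SLO Sig} {r : Sig} {s : Multiset A.carrier}
    (hs : ∀ x ∈ s, A.dia r x ≤ x) : A.dia r s.inf ≤ s.inf :=
  Multiset.le_inf.2 fun x hx => (A.mono r (Multiset.inf_le hx)).trans (hs x hx)

section Axioms

variable {A : SLO Unit}

theorem le_dia (hrefl : A.Valid e_refl) (a : A.carrier) : a ≤ A.dia () a :=
  hrefl fun _ => a

theorem dia_dia_le (htrans : A.Valid e_trans) (a : A.carrier) :
    A.dia () (A.dia () a) ≤ A.dia () a :=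
  htrans fun _ => a

theorem dia_inf_dia_le (hwcon : A.Valid e_wcon) (a b c : A.carrier) :
    A.dia () (a ⊓ b) ⊓ A.dia () (a ⊓ c) ≤ A.dia () (a ⊓ (A.dia () b ⊓ A.dia () c)) :=
  hwcon fun | 0 => a | 1 => b | _ => c

theorem dia_inf_multisetInf_dia_le (hwcon : A.Valid e_wcon) (a : A.carrier)
    (s : Multiset A.carrier) (hs : ∀ x ∈ s, A.dia () x ≤ x) :
    A.dia () a ⊓ (s.map fun x => A.dia () (a ⊓ x)).inf ≤ A.dia () (a ⊓ s.inf) := by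
  induction s using Multiset.induction_on with
  | empty => simp
  | cons x s ih =>
    obtain ⟨hx, hs⟩ := Multiset.forall_mem_cons.1 hs
    rw [Multiset.map_cons, Multiset.inf_cons, Multiset.inf_cons, inf_left_comm]
    calc
      _ ≤ A.dia () (a ⊓ x) ⊓ A.dia () (a ⊓ s.inf) := inf_le_inf_left _ (ih hs)
      _ ≤ A.dia () (a ⊓ (A.dia () x ⊓ A.dia () s.inf)) := dia_inf_dia_le hwcon _ _ _
      _ ≤ A.dia () (a ⊓ (x ⊓ s.inf)) :=
        A.mono () (inf_le_inf_left _ (inf_le_inf hx (dia_multisetInf_le hs)))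

end Axioms

section Branches

variable (A : SLO Unit) (v : ℕ → A.carrier)

/-- The element `◇(b₁ ⊓ ◇(b₂ ⊓ … ◇(bₙ ⊓ ⊤)))` given by a list `[b₁, …, bₙ]`. -/
def diaChain : List A.carrier → A.carrier
  | [] => ⊤
  | b :: L => A.dia () (b ⊓ diaChain L)

/-- The branches of a formula: each descends through nested diamonds, not necessarily to a leaf,
and records the meets of the top-level variables found there. -/
def branches : SP Unit → Multiset (List A.carrier)
  | .var _ => 0
  | .top => 0
  | .and φ ψ => branches φ + branches ψ
  | .dia _ φ => ([] ::ₘ branches φ).map (A.varMeet v φ :: ·)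

/-- The values of all tails of a branch `T`; these are the cuts of the countermodel for `T`. -/
def tailCuts (T : List A.carrier) : Set A.carrier := {c | ∃ L, L <:+ T ∧ A.diaChain L = c}

variable {A v}

theorem dia_diaChain_le (htrans : A.Valid e_trans) (L : List A.carrier) :
    A.dia () (A.diaChain L) ≤ A.diaChain L := by
  cases L with
  | nil => exact le_top
  | cons b L => exact dia_dia_le htrans _

theorem diaChain_le_of_suffix (htrans : A.Valid e_trans) {L T : List A.carrier} (h : L <:+ T) :
    A.diaChain T ≤ A.diaChain L := by
  induction T with
  | nil => rw [List.suffix_nil.1 h]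
  | cons b T ih =>
    rcases List.suffix_cons_iff.1 h with rfl | h
    · exact le_rfl
    · exact (A.mono () inf_le_right).trans ((dia_diaChain_le htrans T).trans (ih h))

theorem isChain_tailCuts (htrans : A.Valid e_trans) (T : List A.carrier) :
    IsChain (· ≤ ·) (A.tailCuts T) := by
  rintro _ ⟨L, hL, rfl⟩ _ ⟨L', hL', rfl⟩ -
  exact (List.suffix_or_suffix_of_suffix hL hL').symm.imp
    (diaChain_le_of_suffix htrans) (diaChain_le_of_suffix htrans)

theorem le_diaChain_of_truth_cutFrame (hrefl : A.Valid e_refl) {T : List A.carrier}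
    {φ : SP Unit} {L : List A.carrier} (hL : L ∈ A.branches v φ) (hLT : L <:+ T) {x : A.carrier}
    (hx : (A.cutFrame (A.tailCuts T)).truth (A.lowerValuation v) φ x) :
    x ≤ A.diaChain L := by
  induction φ generalizing L x with
  | var n => exact absurd hL (Multiset.notMem_zero L)
  | top => exact absurd hL (Multiset.notMem_zero L)
  | and φ ψ ihφ ihψ =>
    exact (Multiset.mem_add.1 hL).elim (ihφ · hLT hx.1) (ihψ · hLT hx.2)
  | dia r φ ih =>
    obtain ⟨(y : A.carrier), hacc, hy⟩ := hx
    obtain ⟨L', hL', rfl⟩ := Multiset.mem_map.1 hL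
    have hyL' : y ≤ A.diaChain L' := by
      rcases Multiset.mem_cons.1 hL' with rfl | hL'
      · exact le_top
      · exact ih hL' ((List.suffix_cons _ _).trans hLT) hy
    have hyL : y ≤ A.diaChain (A.varMeet v φ :: L') :=
      (le_inf (le_varMeet_of_truth_cutFrame hy) hyL').trans (le_dia hrefl _)
    exact hacc _ ⟨_, hLT, rfl⟩ hyL

theorem varMeet_inf_branches_le_eval (htrans : A.Valid e_trans) (hwcon : A.Valid e_wcon)
    (φ : SP Unit) :
    A.varMeet v φ ⊓ ((A.branches v φ).map A.diaChain).inf ≤ A.eval v φ := by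
  induction φ with
  | var n => exact inf_le_left
  | top => exact le_top
  | and φ ψ ihφ ihψ =>
    rw [branches, Multiset.map_add, Multiset.inf_add, varMeet, inf_inf_inf_comm]
    exact inf_le_inf ihφ ihψ
  | dia r φ ih =>
    have hclosed : ∀ x ∈ (A.branches v φ).map A.diaChain, A.dia () x ≤ x :=
      Multiset.forall_mem_map_iff.2 fun L _ => dia_diaChain_le htrans L
    calc
      _ = A.dia () (A.varMeet v φ) ⊓
          (((A.branches v φ).map A.diaChain).map fun x => A.dia () (A.varMeet v φ ⊓ x)).inf := by
        simp [varMeet, branches, diaChain, Function.comp_def]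
      _ ≤ A.dia () (A.varMeet v φ ⊓ ((A.branches v φ).map A.diaChain).inf) :=
        dia_inf_multisetInf_dia_le hwcon _ _ hclosed
      _ ≤ A.dia () (A.eval v φ) := A.mono () ih

end Branches

section Completeness

variable {A : SLO Unit} {v : ℕ → A.carrier} {σ τ : SP Unit}

theorem truth_cutFrame_eval_of_krCons (h : KrCons EcLin (σ, τ)) {C : Set A.carrier}
    (hchain : IsChain (· ≤ ·) C) (hclosed : ∀ c ∈ C, A.dia () c ≤ c) :
    (A.cutFrame C).truth (A.lowerValuation v) τ (A.eval v σ) :=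
  h _ (cutFrame_validSet_ecLin hchain) _ _ (truth_cutFrame_of_le_eval (fun _ => hclosed) le_rfl)

theorem eval_le_varMeet_of_krCons (h : KrCons EcLin (σ, τ)) : A.eval v σ ≤ A.varMeet v τ :=
  le_varMeet_of_truth_cutFrame <|
    truth_cutFrame_eval_of_krCons (C := ∅) h .empty fun _ hc => hc.elim

theorem eval_le_diaChain_of_krCons (hrefl : A.Valid e_refl) (htrans : A.Valid e_trans)
    (h : KrCons EcLin (σ, τ)) {T : List A.carrier} (hT : T ∈ A.branches v τ) :
    A.eval v σ ≤ A.diaChain T := by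
  have hclosed : ∀ c ∈ A.tailCuts T, A.dia () c ≤ c := by
    rintro _ ⟨L, -, rfl⟩
    exact dia_diaChain_le htrans L
  exact le_diaChain_of_truth_cutFrame hrefl hT List.suffix_rfl
    (truth_cutFrame_eval_of_krCons h (isChain_tailCuts htrans T) hclosed)

end Completeness

end SLO

theorem KrCons.sloCons_ecLin {ι : SPImp Unit} (h : KrCons EcLin ι) : SLOCons EcLin ι := by
  intro A hA v
  have hrefl : A.Valid e_refl := hA _ (by simp)
  have htrans : A.Valid e_trans := hA _ (by simp)
  have hwcon : A.Valid e_wcon := hA _ (by simp)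
  have hbranches : A.eval v ι.1 ≤ ((A.branches v ι.2).map A.diaChain).inf :=
    Multiset.le_inf.2 <| Multiset.forall_mem_map_iff.2 fun _ hT =>
      SLO.eval_le_diaChain_of_krCons hrefl htrans h hT
  exact (le_inf (SLO.eval_le_varMeet_of_krCons h) hbranches).trans
    (SLO.varMeet_inf_branches_le_eval htrans hwcon ι.2)

/-- `SPi_lin` (axiomatised by `Ec_lin = {e_refl, e_trans, e_wcon}`)
is complete. Moreover, the frames validating `Ec_lin` are exactly the linear
quasiorders, i.e. the reflexive, transitive and weakly connected frames. -/
theorem stmt17 :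
    IsCompleteLogic ({e_refl, e_trans, e_wcon} : Set (SPImp Unit)) ∧
    (∀ F : KFrame Unit,
      F.ValidSet ({e_refl, e_trans, e_wcon} : Set (SPImp Unit)) ↔
        (Reflexive (F.rel ()) ∧ Transitive (F.rel ()) ∧
          ∀ x y z : F.world, F.rel () x y → F.rel () x z →
            F.rel () y z ∨ F.rel () z y ∨ y = z)) :=
  ⟨fun _ => ⟨KrCons.sloCons_ecLin, SLOCons.krCons⟩, KFrame.validSet_ecLin_iff⟩
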